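/- arXiv:1006.1112 — 4 statements merged into one kernel-verified Lean document; each statement's English description precedes it below -/
import Mathlib

section
/- Let k be an algebraically closed field of characteristic zero, K a finite commutative group of order N, and K̂ = Hom(K, k*) its character group. For any isotropic subgroup E of H_K = K × K̂ with respect to e_K, the order of E divides N. -/
variable (k : Type) [Field k] [IsAlgClosed k] [CharZero k]
variable (K : Type) [AddCommGroup K] [Finite K]

/-- The character group `Hom(K, k*)` of `K` (characters written additively via `Additive`). -/
abbrev Khat := K →+ Additive kˣ

/-- `H_K = K × K̂`. -/
abbrev HK := K × Khat k K

/-- The pairing `e_K((x,ℓ),(x',ℓ')) = ℓ'(x)/ℓ(x')`. -/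
def eK (h h' : HK k K) : kˣ :=
  Additive.toMul (h'.2 h.1) / Additive.toMul (h.2 h'.1)

/-!
Let `B` be the projection of `E` to `K` and `C = {ℓ | (0, ℓ) ∈ E}`, so that `|E| = |B| |C|`.
Pairing `(0, ℓ)` with the elements of `E`, isotropy says that every `ℓ ∈ C` is trivial on `B`, so
`C` is a subgroup of `B^⊥ ≃ Hom(K / B, k*)`. The order of `Hom(G, k*)` divides that of `G` for every
finite commutative group `G`: split `G` into cyclic groups, and note that for cyclic `G` evaluation
at a generator embeds `Hom(G, k*)` in `k*`, where finite subgroups are cyclic. Hence `|C|` divides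
`[K : B]`.
-/

section Characters

variable (G R : Type*) [CommGroup G] [Finite G] [CommRing R] [IsDomain R]

theorem card_monoidHom_units_dvd_of_isCyclic [IsCyclic G] :
    Nat.card (G →* Rˣ) ∣ Nat.card G := by
  obtain ⟨g, hg⟩ := IsCyclic.exists_generator (α := G)
  have eval_injective : Function.Injective (MonoidHom.eval (N := Rˣ) g) := fun φ ψ h ↦
    (MonoidHom.eq_iff_eq_on_generator hg φ ψ).mpr h
  have : IsCyclic (G →* Rˣ) :=
    isCyclic_of_injective_ringHom ((Units.coeHom R).comp (MonoidHom.eval g))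
      (Units.val_injective.comp eval_injective)
  have pow_card_eq_one (φ : G →* Rˣ) : φ ^ Nat.card G = 1 := by
    ext x
    rw [MonoidHom.pow_apply, ← map_pow, pow_card_eq_one', map_one, MonoidHom.one_apply]
  rw [← IsCyclic.exponent_eq_card (α := G →* Rˣ)]
  exact Monoid.exponent_dvd_of_forall_pow_eq_one pow_card_eq_one

theorem card_monoidHom_units_dvd : Nat.card (G →* Rˣ) ∣ Nat.card G := by
  classical
  obtain ⟨ι, _, n, one_lt_n, ⟨e⟩⟩ := CommGroup.equiv_prod_multiplicative_zmod_of_finite G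
  have (i : ι) : NeZero (n i) := .of_gt (one_lt_n i)
  let C (i : ι) := Multiplicative (ZMod (n i))
  calc Nat.card (G →* Rˣ)
      = ∏ i, Nat.card (C i →* Rˣ) := by
        rw [← Nat.card_pi]
        exact Nat.card_congr (e.monoidHomCongrLeft.trans (Pi.monoidHomMulEquiv C Rˣ)).toEquiv
    _ ∣ ∏ i, Nat.card (C i) :=
        Finset.prod_dvd_prod_of_dvd _ _ fun i _ ↦ card_monoidHom_units_dvd_of_isCyclic (C i) R
    _ = Nat.card G := by rw [← Nat.card_pi, Nat.card_congr e.toEquiv]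

end Characters

/-- The annihilator `B^⊥` of a subgroup `B` of `A` in `Hom(A, M)`, encoded as the kernel of
restriction to `B`. -/
def homAnnihilator {A : Type*} [AddGroup A] (M : Type*) [AddCommGroup M] (B : AddSubgroup A) :
    AddSubgroup (A →+ M) :=
  (AddMonoidHom.domRestrictHom B M).ker

theorem mem_homAnnihilator {A M : Type*} [AddGroup A] [AddCommGroup M] {B : AddSubgroup A}
    {ℓ : A →+ M} : ℓ ∈ homAnnihilator M B ↔ ∀ x ∈ B, ℓ x = 0 :=
  AddMonoidHom.domRestrict_eq_zero_iff

theorem card_homAnnihilator_units_dvd_index {A : Type*} (R : Type*) [AddCommGroup A] [CommRing R]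
    [IsDomain R] (B : AddSubgroup A) [B.FiniteIndex] :
    Nat.card (homAnnihilator (Additive Rˣ) B) ∣ B.index :=
  calc Nat.card (homAnnihilator (Additive Rˣ) B)
      = Nat.card (A ⧸ B →+ Additive Rˣ) :=
        Nat.card_congr (AddMonoidHom.domRestrictHomKerEquiv (Additive Rˣ) B).toEquiv
    _ = Nat.card (Multiplicative (A ⧸ B) →* Rˣ) := Nat.card_congr AddMonoidHom.toMultiplicativeLeft
    _ ∣ B.index := card_monoidHom_units_dvd (Multiplicative (A ⧸ B)) R

theorem card_map_fst_mul_card_comap_inr {A B : Type*} [AddGroup A] [AddGroup B]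
    (E : AddSubgroup (A × B)) :
    Nat.card (E.map (AddMonoidHom.fst A B)) * Nat.card (E.comap (AddMonoidHom.inr A B)) =
      Nat.card E := by
  let N := (AddMonoidHom.fst A B).ker ⊓ E
  have range_inr_eq_ker_fst : (AddMonoidHom.inr A B).range = (AddMonoidHom.fst A B).ker := by
    ext ⟨a, b⟩
    simp [eq_comm, AddSubgroup.mem_prod]
  have card_comap : Nat.card (E.comap (AddMonoidHom.inr A B)) = Nat.card N := by
    rw [← AddSubgroup.card_map_of_injective (f := AddMonoidHom.inr A B)
      (Prod.mk_right_injective 0), AddSubgroup.map_comap_eq, range_inr_eq_ker_fst]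
  have relIndex_eq : N.relIndex E = Nat.card (E.map (AddMonoidHom.fst A B)) := by
    rw [AddSubgroup.inf_relIndex_right, AddSubgroup.relIndex_ker]
  calc Nat.card (E.map (AddMonoidHom.fst A B)) * Nat.card (E.comap (AddMonoidHom.inr A B))
      = (⊥ : AddSubgroup (A × B)).relIndex N * N.relIndex E := by
        rw [card_comap, relIndex_eq, AddSubgroup.relIndex_bot_left, mul_comm]
    _ = (⊥ : AddSubgroup (A × B)).relIndex E :=
        AddSubgroup.relIndex_mul_relIndex _ _ _ bot_le inf_le_right
    _ = Nat.card E := AddSubgroup.relIndex_bot_left E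

/-- Isotropy for the pairing `((x, ℓ), (x', ℓ')) ↦ ℓ' x - ℓ x'` on `A × Hom(A, M)`; for
`M = Additive kˣ` this pairing is `e_K` written additively. -/
def IsIsotropic {A M : Type*} [AddGroup A] [AddCommGroup M] (E : AddSubgroup (A × (A →+ M))) :
    Prop :=
  ∀ e ∈ E, ∀ e' ∈ E, e'.2 e.1 = e.2 e'.1

theorem IsIsotropic.comap_inr_le_homAnnihilator {A M : Type*} [AddGroup A] [AddCommGroup M]
    {E : AddSubgroup (A × (A →+ M))} (hE : IsIsotropic E) :
    E.comap (AddMonoidHom.inr A (A →+ M)) ≤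
      homAnnihilator M (E.map (AddMonoidHom.fst A (A →+ M))) := by
  intro ℓ hℓ
  rw [mem_homAnnihilator]
  rintro _ ⟨e, he, rfl⟩
  calc ℓ e.1 = e.2 0 := (hE (0, ℓ) hℓ e he).symm
    _ = 0 := map_zero e.2

theorem card_isotropic_dvd_general {A R : Type*} [AddCommGroup A] [Finite A] [CommRing R]
    [IsDomain R] {E : AddSubgroup (A × (A →+ Additive Rˣ))} (hE : IsIsotropic E) :
    Nat.card E ∣ Nat.card A := by
  let B := E.map (AddMonoidHom.fst A (A →+ Additive Rˣ))
  let C := E.comap (AddMonoidHom.inr A (A →+ Additive Rˣ))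
  have card_C_dvd : Nat.card C ∣ B.index :=
    (AddSubgroup.card_dvd_of_le hE.comap_inr_le_homAnnihilator).trans
      (card_homAnnihilator_units_dvd_index R B)
  calc Nat.card E = Nat.card B * Nat.card C := (card_map_fst_mul_card_comap_inr E).symm
    _ ∣ Nat.card B * B.index := Nat.mul_dvd_mul_left _ card_C_dvd
    _ = Nat.card A := B.card_mul_index

/-- The order of an isotropic subgroup of `H_K` divides `N`, the order of `K`. -/
theorem card_isotropic_dvd (N : ℕ) (hN : Nat.card K = N)
    (E : AddSubgroup (HK k K))
    (hE : ∀ e ∈ E, ∀ e' ∈ E, eK k K e e' = 1) :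
    Nat.card E ∣ N := by
  have isIsotropic : IsIsotropic E := fun e he e' he' ↦
    Additive.toMul.injective (div_eq_one.mp (hE e he e' he'))
  exact hN ▸ card_isotropic_dvd_general isIsotropic
end

section
/- Let k be an algebraically closed field of characteristic zero, K a finite commutative group of order N, and K̂ = Hom(K, k*) its character group. For any isotropic subgroup E of H_K = K × K̂ with respect to e_K, the index of E in H_K is divisible by N; in particular this index is at least N. -/
variable (k : Type) [Field k] [IsAlgClosed k] [CharZero k]
variable (K : Type) [AddCommGroup K] [Finite K]

/-!
Because `E` is isotropic and `e_K` is nondegenerate, `e ↦ e_K(e, ·)` embeds `E` into the characters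
of `H_K` trivial on `E`, that is, into the dual of `H_K / E`, whose order is the index of `E`. Hence
`|E|` divides `[H_K : E]`, and multiplying by `[H_K : E]` gives `N² = |H_K| ∣ [H_K : E]²`.
-/

section AddCharacters

variable (G M : Type*) [AddCommGroup G] [Finite G] [CommMonoid M]
  [hM : HasEnoughRootsOfUnity M (AddMonoid.exponent G)]

theorem card_addMonoidHom_of_hasEnoughRootsOfUnity :
    Nat.card (G →+ Additive Mˣ) = Nat.card G := by
  rw [← Monoid.exponent_multiplicative] at hM
  calc
    Nat.card (G →+ Additive Mˣ) = Nat.card (Multiplicative G →* Mˣ) :=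
      Nat.card_congr AddMonoidHom.toMultiplicativeLeft
    _ = Nat.card G := CommGroup.card_monoidHom_of_hasEnoughRootsOfUnity (Multiplicative G) M

variable {G}

theorem eq_zero_of_forall_addMonoidHom_apply_eq_zero {x : G}
    (hx : ∀ χ : G →+ Additive Mˣ, χ x = 0) : x = 0 := by
  rw [← Monoid.exponent_multiplicative] at hM
  by_contra hne
  obtain ⟨φ, hφ⟩ := CommGroup.exists_apply_ne_one_of_hasEnoughRootsOfUnity
    (Multiplicative G) M (a := .ofAdd x) hne
  exact hφ (hx (AddMonoidHom.toMultiplicativeLeft.symm φ))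

end AddCharacters

theorem exponent_addMonoidHom_dvd_exponent (G A : Type*) [AddMonoid G] [AddCommMonoid A] :
    AddMonoid.exponent (G →+ A) ∣ AddMonoid.exponent G := by
  refine AddMonoid.exponent_dvd_of_forall_nsmul_eq_zero fun χ ↦ ?_
  ext x
  rw [AddMonoidHom.nsmul_apply, ← map_nsmul, AddMonoid.exponent_nsmul_eq_zero, map_zero,
    AddMonoidHom.zero_apply]

theorem exponent_prod_addMonoidHom (G A : Type*) [AddMonoid G] [AddCommMonoid A] :
    AddMonoid.exponent (G × (G →+ A)) = AddMonoid.exponent G := by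
  rw [AddMonoid.exponent_prod]
  exact Nat.lcm_eq_left (exponent_addMonoidHom_dvd_exponent G A)

theorem card_dvd_index_of_forall_pairing_eq_zero {G H M : Type*} [AddGroup G]
    [AddCommGroup H] [CommMonoid M] (b : G →+ H →+ Additive Mˣ) (hb : Function.Injective b)
    (E : AddSubgroup G) (F : AddSubgroup H) [F.FiniteIndex]
    [HasEnoughRootsOfUnity M (AddMonoid.exponent (H ⧸ F))] (hEF : ∀ e ∈ E, ∀ f ∈ F, b e f = 0) :
    Nat.card E ∣ F.index := by
  have map_le_ker : E.map b ≤ (AddMonoidHom.domRestrictHom F (Additive Mˣ)).ker := by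
    rintro _ ⟨e, he, rfl⟩
    exact AddMonoidHom.domRestrict_eq_zero_iff.mpr (hEF e he)
  have card_ker : Nat.card (AddMonoidHom.domRestrictHom F (Additive Mˣ)).ker = F.index := by
    rw [Nat.card_congr (AddMonoidHom.domRestrictHomKerEquiv (Additive Mˣ) F).toEquiv,
      card_addMonoidHom_of_hasEnoughRootsOfUnity, AddSubgroup.index_eq_card]
  rw [← AddSubgroup.card_map_of_injective hb, ← card_ker]
  exact AddSubgroup.card_dvd_of_le map_le_ker

theorem card_dvd_index_sq_of_forall_pairing_eq_zero {H M : Type*} [AddCommGroup H]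
    [Finite H] [CommMonoid M] [HasEnoughRootsOfUnity M (AddMonoid.exponent H)]
    (b : H →+ H →+ Additive Mˣ) (hb : Function.Injective b) (E : AddSubgroup H)
    (hE : ∀ e ∈ E, ∀ e' ∈ E, b e e' = 0) : Nat.card H ∣ E.index ^ 2 := by
  have : HasEnoughRootsOfUnity M (AddMonoid.exponent (H ⧸ E)) :=
    .of_dvd M (AddGroup.exponent_quotient_dvd E)
  rw [← E.card_mul_index, sq]
  exact mul_dvd_mul_right (card_dvd_index_of_forall_pairing_eq_zero b hb E E hE) E.index

/-- The standard alternating pairing on the product of `G` and its dual `G →+ A`: the pairing `eK`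
written additively and bundled as a biadditive map, so that it can serve as a homomorphism into the
dual of the product. -/
def symplecticPairing (G A : Type*) [AddGroup G] [AddCommGroup A] :
    G × (G →+ A) →+ G × (G →+ A) →+ A :=
  AddMonoidHom.mk'
    (fun h ↦ AddMonoidHom.mk' (fun h' ↦ h'.2 h.1 - h.2 h'.1) fun h₁ h₂ ↦ by
      simp only [Prod.fst_add, Prod.snd_add, AddMonoidHom.add_apply, map_add]
      abel)
    fun h₁ h₂ ↦ by
      ext h' : 1
      simp only [Prod.fst_add, Prod.snd_add, AddMonoidHom.add_apply, map_add,
        AddMonoidHom.mk'_apply]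
      abel

theorem symplecticPairing_apply {G A : Type*} [AddGroup G] [AddCommGroup A]
    (h h' : G × (G →+ A)) : symplecticPairing G A h h' = h'.2 h.1 - h.2 h'.1 :=
  rfl

theorem ofMul_eK (k K : Type) [Field k] [AddCommGroup K] (h h' : HK k K) :
    Additive.ofMul (eK k K h h') = symplecticPairing K (Additive kˣ) h h' :=
  rfl

theorem symplecticPairing_injective {G A : Type*} [AddGroup G] [AddCommGroup A]
    (hG : ∀ x : G, (∀ χ : G →+ A, χ x = 0) → x = 0) :
    Function.Injective (symplecticPairing G A) := by
  refine (injective_iff_map_eq_zero _).mpr fun ⟨x, χ⟩ h ↦ ?_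
  have pairing_eq_zero (y : G) (ψ : G →+ A) : ψ x - χ y = 0 :=
    (symplecticPairing_apply (x, χ) (y, ψ)).symm.trans (DFunLike.congr_fun h (y, ψ))
  have hx : x = 0 := hG x fun ψ ↦ by simpa only [map_zero, sub_zero] using pairing_eq_zero 0 ψ
  have hχ : χ = 0 := by
    ext y
    simpa only [AddMonoidHom.zero_apply, zero_sub, neg_eq_zero] using pairing_eq_zero y 0
  rw [hx, hχ, Prod.mk_zero_zero]

theorem card_dvd_index_isotropic_general {G M : Type*} [AddCommGroup G] [Finite G] [CommMonoid M]
    [HasEnoughRootsOfUnity M (AddMonoid.exponent G)]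
    (E : AddSubgroup (G × (G →+ Additive Mˣ)))
    (hE : ∀ e ∈ E, ∀ e' ∈ E, symplecticPairing G (Additive Mˣ) e e' = 0) :
    Nat.card G ∣ E.index ∧ Nat.card G ≤ E.index := by
  have card_dual : Nat.card (G →+ Additive Mˣ) = Nat.card G :=
    card_addMonoidHom_of_hasEnoughRootsOfUnity G M
  have : Finite (G →+ Additive Mˣ) := Nat.finite_of_card_ne_zero (card_dual ▸ Nat.card_pos.ne')
  have : HasEnoughRootsOfUnity M (AddMonoid.exponent (G × (G →+ Additive Mˣ))) := by
    rwa [exponent_prod_addMonoidHom]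
  have injective : Function.Injective (symplecticPairing G (Additive Mˣ)) :=
    symplecticPairing_injective fun _ ↦ eq_zero_of_forall_addMonoidHom_apply_eq_zero M
  have card_sq_dvd : Nat.card G ^ 2 ∣ E.index ^ 2 := by
    simpa only [Nat.card_prod, card_dual, ← sq] using
      card_dvd_index_sq_of_forall_pairing_eq_zero _ injective E hE
  have card_dvd : Nat.card G ∣ E.index := (Nat.pow_dvd_pow_iff two_ne_zero).mp card_sq_dvd
  exact ⟨card_dvd, Nat.le_of_dvd (Nat.pos_of_ne_zero E.index_ne_zero_of_finite) card_dvd⟩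

/-- The index of an isotropic subgroup of `H_K` is divisible by `N`, the order of `K`;
in particular this index is at least `N`. -/
theorem card_dvd_index_isotropic (N : ℕ) (hN : Nat.card K = N)
    (E : AddSubgroup (HK k K))
    (hE : ∀ e ∈ E, ∀ e' ∈ E, eK k K e e' = 1) :
    N ∣ E.index ∧ N ≤ E.index :=
  hN ▸ card_dvd_index_isotropic_general E fun e he e' he' ↦
    (ofMul_eK k K e e').symm.trans (congrArg Additive.ofMul (hE e he e' he'))
end

section
/- Let k be an algebraically closed field of characteristic zero, K a finite commutative group of order N, and K̂ = Hom(K, k*) its character group. Every commutative subgroup Ẽ of the finite group G_K¹ = μ_N × K × K̂ has index at least N in G_K¹. -/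
variable (k : Type) [Field k] [IsAlgClosed k] [CharZero k]
variable (K : Type) [AddCommGroup K] [Finite K]

/-- The set `G_K = k* × K × K̂`. -/
abbrev GK := kˣ × K × Khat k K

/-- The product `(a, x, ℓ)·(a', x', ℓ') = (a·a'·ℓ'(x), x + x', ℓ·ℓ')` on `G_K`. -/
def gmul (g g' : GK k K) : GK k K :=
  (g.1 * g'.1 * Additive.toMul (g'.2.2 g.2.1), g.2.1 + g'.2.1, g.2.2 + g'.2.2)

/-- The identity element `(1, 0, 1)` of `G_K`. -/
def gone : GK k K := (1, 0, 0)

/-- The inverse `(a, x, ℓ)⁻¹ = (a⁻¹·ℓ(x), −x, ℓ⁻¹)` on `G_K`. -/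
def ginv (g : GK k K) : GK k K :=
  (g.1⁻¹ * Additive.toMul (g.2.2 g.2.1), -g.2.1, -g.2.2)

theorem gmul_assoc (g g' g'' : GK k K) :
    gmul k K (gmul k K g g') g'' = gmul k K g (gmul k K g' g'') := by
  unfold gmul
  refine Prod.ext ?_ (Prod.ext ?_ ?_)
  · simp [map_add, toMul_add, mul_assoc, mul_comm, mul_left_comm]
  · simp [add_assoc]
  · exact @add_assoc (Khat k K) _ _ _ _

theorem gone_mul (g : GK k K) : gmul k K (gone k K) g = g := by
  unfold gmul gone
  refine Prod.ext ?_ (Prod.ext ?_ ?_)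
  · simp
  · simp
  · exact @zero_add (Khat k K) _ _

theorem gmul_one (g : GK k K) : gmul k K g (gone k K) = g := by
  unfold gmul gone
  refine Prod.ext ?_ (Prod.ext ?_ ?_)
  · simp
  · simp
  · exact @add_zero (Khat k K) _ _

theorem ginv_mul (g : GK k K) : gmul k K (ginv k K g) g = gone k K := by
  unfold gmul ginv gone
  refine Prod.ext ?_ (Prod.ext ?_ ?_)
  · simp [mul_assoc, mul_comm, mul_left_comm]
  · simp
  · exact @neg_add_cancel (Khat k K) _ _

/-- The group `G_K`: the set `k* × K × K̂` equipped with the product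
`(a, x, ℓ)·(a', x', ℓ') = (a·a'·ℓ'(x), x + x', ℓ·ℓ')`. -/
instance : Group (GK k K) where
  mul := gmul k K
  one := gone k K
  inv := ginv k K
  mul_assoc := gmul_assoc k K
  one_mul := gone_mul k K
  mul_one := gmul_one k K
  inv_mul_cancel := ginv_mul k K

/-- The projection `π : G_K → H_K`, `(a, x, ℓ) ↦ (x, ℓ)`. -/
def pigk (g : GK k K) : HK k K := g.2
/-- For each character `ℓ` and each `x : K`, the value `ℓ(x)` is an `N`-th root of unity,
where `N` is the order of `K`. -/
theorem char_val_pow (N : ℕ) (hN : Nat.card K = N) (ℓ : Khat k K) (x : K) :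
    Additive.toMul (ℓ x) ^ N = 1 := by
  have hx : N • x = 0 := by
    subst hN
    exact card_nsmul_eq_zero'
  calc Additive.toMul (ℓ x) ^ N = Additive.toMul (N • ℓ x) := rfl
    _ = Additive.toMul (ℓ (N • x)) := congrArg Additive.toMul (ℓ.map_nsmul N x).symm
    _ = 1 := by rw [hx, map_zero]; rfl

/-- The subgroup `G_K¹ = μ_N × K × K̂` of `G_K`, where `μ_N ⊆ k*` is the group of `N`-th
roots of unity and `N` is the order of `K`. -/
def GK1 (N : ℕ) (hN : Nat.card K = N) : Subgroup (GK k K) where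
  carrier := {g | g.1 ^ N = 1}
  one_mem' := by
    show (gone k K).1 ^ N = 1
    simp [gone]
  mul_mem' := by
    intro a b ha hb
    show (gmul k K a b).1 ^ N = 1
    simp only [gmul, mul_pow]
    rw [ha, hb, char_val_pow k K N hN]
    simp
  inv_mem' := by
    intro a ha
    show (ginv k K a).1 ^ N = 1
    simp only [ginv, mul_pow, inv_pow]
    rw [ha, char_val_pow k K N hN]
    simp

/-!
The commutator of two elements of `G_K` is the value of the pairing `e_K` on their images in
`H_K = K × K̂`, so a commutative subgroup of `G_K` has isotropic image `B` in `H_K`. As `e_K` is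
nondegenerate, restricting characters from `H_K` to `B` shows that the orthogonal of `B` has index
`|B|`; it contains `B`, hence `|B| ≤ [H_K : B]` and `N² = |B| [H_K : B] ≤ [H_K : B]²`. Passing to
the image in `H_K` can only decrease the index.
-/

section Pairing

variable {G H M : Type*} [Group G] [CommGroup H] [CommMonoid M]

/-- The (left) orthogonal of a subgroup `B ≤ H` under a pairing `e : G × H → Mˣ`: the elements of
`G` pairing trivially with all of `B`. The pairing is given in curried form. -/
def orthogonalSubgroup (e : G →* H →* Mˣ) (B : Subgroup H) : Subgroup G :=
  ((MonoidHom.domRestrictHom B Mˣ).comp e).ker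

theorem mem_orthogonalSubgroup {e : G →* H →* Mˣ} {B : Subgroup H} {g : G} :
    g ∈ orthogonalSubgroup e B ↔ ∀ b ∈ B, e g b = 1 := by
  rw [orthogonalSubgroup, MonoidHom.mem_ker, MonoidHom.comp_apply, MonoidHom.domRestrictHom_apply,
    MonoidHom.domRestrict_eq_one_iff]

variable [Finite H] [HasEnoughRootsOfUnity M (Monoid.exponent H)]

theorem index_orthogonalSubgroup {e : G →* H →* Mˣ} (he : Function.Surjective e)
    (B : Subgroup H) : (orthogonalSubgroup e B).index = Nat.card B := by
  have : HasEnoughRootsOfUnity M (Monoid.exponent B) :=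
    HasEnoughRootsOfUnity.of_dvd M (Monoid.exponent_submonoid_dvd B.toSubmonoid)
  have hsurj : Function.Surjective ((MonoidHom.domRestrictHom B Mˣ).comp e) :=
    (MonoidHom.domRestrict_surjective M B).comp he
  rw [orthogonalSubgroup, Subgroup.index_ker, MonoidHom.range_eq_top.mpr hsurj, Subgroup.card_top,
    CommGroup.card_monoidHom_of_hasEnoughRootsOfUnity]

theorem pairing_surjective_of_injective {e : H →* H →* Mˣ} (he : Function.Injective e) :
    Function.Surjective e :=
  let ⟨dualEquiv⟩ := CommGroup.monoidHom_mulEquiv_of_hasEnoughRootsOfUnity H M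
  he.surjective_of_finite dualEquiv.symm.toEquiv

theorem card_le_index_of_isotropic {e : H →* H →* Mˣ} (he : Function.Injective e)
    {B : Subgroup H} (hB : ∀ x ∈ B, ∀ y ∈ B, e x y = 1) : Nat.card B ≤ B.index := by
  have hle : B ≤ orthogonalSubgroup e B := fun x hx ↦ mem_orthogonalSubgroup.mpr (hB x hx)
  calc Nat.card B = (orthogonalSubgroup e B).index :=
        (index_orthogonalSubgroup (pairing_surjective_of_injective he) B).symm
    _ ≤ B.index := Subgroup.index_antitone hle

theorem card_le_index_sq_of_isotropic {e : H →* H →* Mˣ} (he : Function.Injective e)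
    {B : Subgroup H} (hB : ∀ x ∈ B, ∀ y ∈ B, e x y = 1) : Nat.card H ≤ B.index ^ 2 :=
  calc Nat.card H = Nat.card B * B.index := B.card_mul_index.symm
    _ ≤ B.index * B.index := Nat.mul_le_mul_right _ (card_le_index_of_isotropic he hB)
    _ = B.index ^ 2 := (sq _).symm

theorem card_le_index_sq_of_commutator_pairing {e : H →* H →* Mˣ} (he : Function.Injective e)
    {p : G →* H} (hp : Function.Surjective p)
    (hcomm : ∀ a b, a * b = b * a → e (p a) (p b) = 1)
    {E : Subgroup G} [E.FiniteIndex] (hE : ∀ a ∈ E, ∀ b ∈ E, a * b = b * a) :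
    Nat.card H ≤ E.index ^ 2 := by
  have hiso : ∀ x ∈ E.map p, ∀ y ∈ E.map p, e x y = 1 := by
    rintro _ ⟨a, ha, rfl⟩ _ ⟨b, hb, rfl⟩
    exact hcomm a b (hE a ha b hb)
  have hindex : (E.map p).index ≤ E.index :=
    Nat.le_of_dvd (Nat.pos_of_ne_zero Subgroup.FiniteIndex.index_ne_zero) (E.index_map_dvd hp)
  exact (card_le_index_sq_of_isotropic he hiso).trans (Nat.pow_le_pow_left hindex 2)

end Pairing

section CharacterPairing

variable (A M : Type*) [CommGroup A] [CommMonoid M]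

/-- The canonical alternating pairing `((x, χ), (y, ψ)) ↦ ψ(x) / χ(y)` on the product of a
commutative group with its character group, in curried form. For `A = K` written multiplicatively
and `M = k` this is the pairing `eK`. -/
def characterPairing : A × (A →* Mˣ) →* A × (A →* Mˣ) →* Mˣ :=
  MonoidHom.mk' (fun h ↦ MonoidHom.mk' (fun h' ↦ h'.2 h.1 / h.2 h'.1) fun h₁ h₂ ↦ by
      simp [mul_div_mul_comm]) fun h₁ h₂ ↦ by
    ext1
    simp [mul_div_mul_comm]

variable [Finite A] [HasEnoughRootsOfUnity M (Monoid.exponent A)]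

theorem characterPairing_injective : Function.Injective (characterPairing A M) := by
  refine (injective_iff_map_eq_one _).mpr fun ⟨x, χ⟩ h ↦ ?_
  have hpair (y : A) (ψ : A →* Mˣ) : ψ x / χ y = 1 := DFunLike.congr_fun h (y, ψ)
  have hx : x = 1 := (CommGroup.forall_apply_eq_apply_iff A (M := M)).mp fun ψ ↦ by
    simpa using hpair 1 ψ
  have hχ : χ = 1 := MonoidHom.ext fun y ↦ by simpa using hpair y 1
  exact Prod.ext hx hχ

theorem finite_characters : Finite (A →* Mˣ) :=
  let ⟨dualEquiv⟩ := CommGroup.monoidHom_mulEquiv_of_hasEnoughRootsOfUnity A M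
  Finite.of_equiv A dualEquiv.symm.toEquiv

theorem card_prod_characters : Nat.card (A × (A →* Mˣ)) = Nat.card A ^ 2 := by
  rw [Nat.card_prod, CommGroup.card_monoidHom_of_hasEnoughRootsOfUnity, sq]

end CharacterPairing

section GK1

variable (N : ℕ) (hN : Nat.card K = N)

theorem finite_GK1 : Finite (GK1 k K N hN) := by
  have : NeZero N := ⟨hN ▸ Nat.card_pos.ne'⟩
  have : Finite (Multiplicative K →* kˣ) := finite_characters (Multiplicative K) k
  have : Finite (Khat k K) := Finite.of_equiv _ AddMonoidHom.toMultiplicativeLeft.symm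
  let toProd : GK1 k K N hN → rootsOfUnity N k × HK k K := fun g ↦ (⟨g.1.1, g.2⟩, g.1.2)
  have toProd_injective : Function.Injective toProd := fun g g' h ↦
    Subtype.ext (Prod.ext (congrArg (fun p ↦ (p.1 : kˣ)) h) (congrArg (fun p ↦ p.2) h))
  exact Finite.of_injective toProd toProd_injective

/-- The restriction to `G_K¹` of the projection `π : G_K → H_K`, as a homomorphism onto `H_K`
written multiplicatively. -/
def pigk1 : GK1 k K N hN →* Multiplicative K × (Multiplicative K →* kˣ) :=
  MonoidHom.mk' (fun g : GK1 k K N hN ↦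
    (Multiplicative.ofAdd g.1.2.1, AddMonoidHom.toMultiplicativeLeft g.1.2.2)) fun _ _ ↦ rfl

theorem pigk1_surjective : Function.Surjective (pigk1 k K N hN) :=
  fun ⟨x, χ⟩ ↦ ⟨⟨(1, x.toAdd, AddMonoidHom.toMultiplicativeLeft.symm χ), one_pow N⟩, rfl⟩

variable {k K N hN} in
theorem characterPairing_pigk1_eq_one_of_mul_comm {g g' : GK1 k K N hN} (h : g * g' = g' * g) :
    characterPairing (Multiplicative K) k (pigk1 k K N hN g) (pigk1 k K N hN g') = 1 := by
  have hscalar : (gmul k K g g').1 = (gmul k K g' g).1 := congrArg (fun p ↦ p.1.1) h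
  simp only [gmul, mul_comm g'.1.1 g.1.1] at hscalar
  exact div_eq_one.mpr (mul_left_cancel hscalar)

end GK1

/-- Every commutative subgroup `Ẽ` of the finite group `G_K¹ = μ_N × K × K̂` has index at
least `N` in `G_K¹`, where `N` is the order of `K`. -/
theorem GK1_commutative_subgroup_index (N : ℕ) (hN : Nat.card K = N)
    (E : Subgroup (GK1 k K N hN)) (hE : ∀ a ∈ E, ∀ b ∈ E, a * b = b * a) :
    N ≤ E.index := by
  have : Finite (GK1 k K N hN) := finite_GK1 k K N hN
  have : Finite (Multiplicative K →* kˣ) := finite_characters (Multiplicative K) k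
  have hsq : N ^ 2 ≤ E.index ^ 2 :=
    calc N ^ 2 = Nat.card (Multiplicative K) ^ 2 := congrArg (· ^ 2) hN.symm
      _ = Nat.card (Multiplicative K × (Multiplicative K →* kˣ)) :=
        (card_prod_characters (Multiplicative K) k).symm
      _ ≤ E.index ^ 2 := card_le_index_sq_of_commutator_pairing
        (characterPairing_injective (Multiplicative K) k) (pigk1_surjective k K N hN)
        (fun _ _ ↦ characterPairing_pigk1_eq_one_of_mul_comm) hE
  exact (Nat.pow_le_pow_iff_left two_ne_zero).mp hsq
end

section
/- For every positive integer N there exists a finite group G such that every commutative subgroup of G has index at least N in G. -/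
/-!
If a finite group has a commutative subgroup of index `k`, then two random elements both lie in
that subgroup with probability `1 / k ^ 2`, so they commute with at least this probability.
A finite group with commuting probability `1 / N ^ 2`, which can be found among the products of
dihedral groups, therefore has no commutative subgroup of index less than `N`.
-/

theorem finite_of_commProb_ne_zero {M : Type*} [Mul M] (h : commProb M ≠ 0) : Finite M := by
  contrapose! h
  exact commProb_eq_zero_of_infinite M

theorem one_le_commProb_mul_index_sq {G : Type*} [Group G] [Finite G] (H : Subgroup G)
    [IsMulCommutative H] : 1 ≤ commProb G * (H.index : ℚ) ^ 2 :=
  (commProb_eq_one_iff.mpr inferInstance).symm.trans_le H.commProb_subgroup_le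

theorem exists_finite_group_commProb_eq_one_div {n : ℕ} (hn : n ≠ 0) :
    ∃ (G : Type) (_ : Group G), Finite G ∧ commProb G = 1 / n := by
  have hG := DihedralGroup.commProb_reciprocal n
  exact ⟨_, inferInstance, finite_of_commProb_ne_zero (by rw [hG]; positivity), hG⟩

/-- For every positive integer `N` there exists a finite group `G` such that every
commutative subgroup of `G` has index at least `N` in `G`. -/
theorem exists_finite_group_large_commutative_index (N : ℕ) (hN : 0 < N) :
    ∃ (G : Type) (_ : Group G), Finite G ∧
      ∀ H : Subgroup G, (∀ a ∈ H, ∀ b ∈ H, a * b = b * a) → N ≤ H.index := by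
  obtain ⟨G, _, _, hG⟩ := exists_finite_group_commProb_eq_one_div (pow_ne_zero 2 hN.ne')
  refine ⟨G, inferInstance, inferInstance, fun H hH => ?_⟩
  have : IsMulCommutative H := .of_setLike_mul_comm hH
  have hle : 1 ≤ 1 / (N : ℚ) ^ 2 * (H.index : ℚ) ^ 2 := by
    simpa only [hG, Nat.cast_pow] using one_le_commProb_mul_index_sq H
  have hsq : (N : ℚ) ^ 2 ≤ (H.index : ℚ) ^ 2 := by
    rwa [one_div_mul_eq_div, one_le_div (by positivity)] at hle
  exact_mod_cast le_of_sq_le_sq hsq (Nat.cast_nonneg _)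
end
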